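/- Let m ≥ 1 and let R ⊆ ℤ^m. Let L = {0, +, −, <, Ṙ} where Ṙ is an m-ary relation symbol, and let M be the L-structure whose universe is ℤ with the standard ordered additive group structure and with Ṙ interpreted as R. If Th(M) is strong, then R is definable with parameters in the ordered abelian group ⟨ℤ; 0, +, −, <⟩ (i.e., R is Presburger-definable). -/

import Mathlib

/- Common model-theoretic definitions. -/

open FirstOrder Set

universe u v w

/-- An inp-pattern of depth `κ` in `nvars` free variables witnessed in the `L`-structure `N`:
formulas `φ α (x̄; ȳ_α)` (with `m α` parameter variables), positive integers `k α`, and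
parameter tuples `b α i` such that each row is `k α`-inconsistent (no tuple of `N` realizes
`φ α (x̄; b α i)` for `k α` distinct values of `i`), while every path is finitely consistent. -/
def IsInpPattern (L : FirstOrder.Language.{u, v}) (N : Type*) [L.Structure N]
    (κ : Type*) (nvars : ℕ) : Prop :=
  ∃ (m : κ → ℕ) (φ : ∀ α : κ, L.Formula (Fin nvars ⊕ Fin (m α)))
    (k : κ → ℕ) (b : ∀ α : κ, ℕ → Fin (m α) → N),
    (∀ α, 1 ≤ k α) ∧
    (∀ α : κ, ¬ ∃ (x : Fin nvars → N) (s : Finset ℕ),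
        k α ≤ s.card ∧ ∀ i ∈ s, (φ α).Realize (Sum.elim x (b α i))) ∧
    (∀ (η : κ → ℕ) (S : Finset κ), ∃ x : Fin nvars → N,
        ∀ α ∈ S, (φ α).Realize (Sum.elim x (b α (η α))))

/-- `Th(M)` has burden at least `n`: some model of `Th(M)` witnesses an inp-pattern of
depth `n` in a single variable. -/
def HasBurdenAtLeast (L : FirstOrder.Language.{u, v}) (M : Type w) [L.Structure M]
    (n : ℕ) : Prop :=
  ∃ N : FirstOrder.Language.Theory.ModelType.{u, v, max u v w} (L.completeTheory M),
    IsInpPattern L N (Fin n) 1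

/-- `Th(M)` has finite burden: for some `n`, no model of `Th(M)` witnesses an inp-pattern of
depth `n + 1` in a single variable. -/
def HasFiniteBurden (L : FirstOrder.Language.{u, v}) (M : Type w) [L.Structure M] : Prop :=
  ∃ n : ℕ, ¬ HasBurdenAtLeast L M (n + 1)

/-- `Th(M)` is strong: no model of `Th(M)` witnesses an inp-pattern of depth `ω` in any
finite tuple of variables. -/
def IsStrong (L : FirstOrder.Language.{u, v}) (M : Type w) [L.Structure M] : Prop :=
  ∀ (N : FirstOrder.Language.Theory.ModelType.{u, v, max u v w} (L.completeTheory M))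
    (nvars : ℕ), ¬ IsInpPattern L N ℕ nvars

/-- A set `D` in a linear order is discrete if each of its points is isolated in it. -/
def DiscreteIn {R : Type*} [LinearOrder R] (D : Set R) : Prop :=
  ∀ x ∈ D, ∃ a b : R, a < x ∧ x < b ∧ Set.Ioo a b ∩ D = {x}

/-- `M` is definably complete: every nonempty definable subset of `R` that is bounded above
has a least upper bound. -/
def DefinablyComplete (L : FirstOrder.Language.{u, v}) (R : Type w)
    [LinearOrder R] [L.Structure R] : Prop :=
  ∀ X : Set R, (Set.univ : Set R).Definable₁ L X → X.Nonempty → BddAbove X →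
    ∃ a : R, IsLUB X a

/-- Function symbols of the language `{0, +, −, <}` of ordered abelian groups. -/
inductive OagFunc : ℕ → Type
  | zero : OagFunc 0
  | neg : OagFunc 1
  | add : OagFunc 2

/-- Relation symbols of the language `{0, +, −, <}`: just the binary `<`. -/
inductive OagRel : ℕ → Type
  | lt : OagRel 2

/-- The language `{0, +, −, <}` of ordered abelian groups. -/
def Loag : FirstOrder.Language := ⟨OagFunc, OagRel⟩

/-- The standard `{0, +, −, <}`-structure on `ℤ` (Presburger arithmetic). -/
instance : Loag.Structure ℤ where
  funMap {n} f v :=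
    match f with
    | .zero => 0
    | .neg => -(v 0)
    | .add => v 0 + v 1
  RelMap {n} r v :=
    match r with
    | .lt => v 0 < v 1

/-- Relation symbols of the language `{0, +, −, <, Ṙ}` with `Ṙ` an `m`-ary relation
symbol. -/
inductive OagRRel (m : ℕ) : ℕ → Type
  | lt : OagRRel m 2
  | r : OagRRel m m

/-- The language `{0, +, −, <, Ṙ}` with `Ṙ` an `m`-ary relation symbol. -/
def LoagR (m : ℕ) : FirstOrder.Language := ⟨OagFunc, OagRRel m⟩

/-- The `{0, +, −, <, Ṙ}`-structure on `ℤ` with the standard ordered additive group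
structure and `Ṙ` interpreted as `R ⊆ ℤ^m`. -/
def structR (m : ℕ) (R : Set (Fin m → ℤ)) : (LoagR m).Structure ℤ where
  funMap {n} f v :=
    match f with
    | .zero => 0
    | .neg => -(v 0)
    | .add => v 0 + v 1
  RelMap {n} r v :=
    match n, r with
    | _, .lt => v 0 < v 1
    | _, .r => v ∈ R



namespace StrongZ

abbrev Env := ℕ → ℤ

structure DS (D : (Env → Prop) → Prop) : Prop where
  and : ∀ {p q : Env → Prop}, D p → D q → D (fun v => p v ∧ q v)
  not : ∀ {p : Env → Prop}, D p → D (fun v => ¬ p v)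
  ex : ∀ {p : ℤ → Env → Prop}, D (fun v => p (v 0) (fun i => v (i + 1))) → D (fun v => ∃ x, p x v)
  re : ∀ (σ : ℕ → ℕ) {p : Env → Prop}, D p → D (fun v => p (fun i => v (σ i)))
  eq_add : D (fun v => v 0 = v 1 + v 2)
  lt01 : D (fun v => v 0 < v 1)

/-- definable functions -/
def DF (D : (Env → Prop) → Prop) (t : Env → ℤ) : Prop :=
  D (fun v => v 0 = t (fun i => v (i + 1)))

/-- definable families of sets -/
def Fam (D : (Env → Prop) → Prop) (A : ℤ → Env → Prop) : Prop :=
  D (fun v => A (v 0) (fun i => v (i + 1)))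

/-- definable families of functions -/
def FFam (D : (Env → Prop) → Prop) (f : ℤ → Env → ℤ) : Prop :=
  D (fun v => v 0 = f (v 1) (fun i => v (i + 2)))

variable {D : (Env → Prop) → Prop}

namespace DS

theorem congr' {p q : Env → Prop} (hp : D p) (h : ∀ v, p v ↔ q v) : D q := by
  have : p = q := funext fun v => propext (h v)
  exact this ▸ hp

theorem or (h : DS D) {p q : Env → Prop} (hp : D p) (hq : D q) : D (fun v => p v ∨ q v) :=
  congr' (h.not (h.and (h.not hp) (h.not hq))) (fun v => by tauto)

theorem imp (h : DS D) {p q : Env → Prop} (hp : D p) (hq : D q) : D (fun v => p v → q v) :=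
  congr' (h.or (h.not hp) hq) (fun v => by tauto)

theorem iff (h : DS D) {p q : Env → Prop} (hp : D p) (hq : D q) : D (fun v => (p v ↔ q v)) :=
  congr' (h.and (h.imp hp hq) (h.imp hq hp)) (fun v => by tauto)

theorem all (h : DS D) {p : ℤ → Env → Prop} (hp : D (fun v => p (v 0) (fun i => v (i + 1)))) :
    D (fun v => ∀ x, p x v) :=
  congr' (h.not (h.ex (p := fun x v => ¬ p x v) (h.not hp))) (fun v => by push Not; rfl)

theorem lt_var (h : DS D) (i j : ℕ) : D (fun v => v i < v j) :=
  h.re (fun k => if k = 0 then i else j) h.lt01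

theorem eq_var (h : DS D) (i j : ℕ) : D (fun v => v i = v j) :=
  congr' (h.and (h.not (h.lt_var i j)) (h.not (h.lt_var j i))) (fun v => by omega)

theorem tr (h : DS D) : D (fun _ => True) :=
  congr' (h.eq_var 0 0) (fun v => by simp)

theorem var (h : DS D) (k : ℕ) : DF D (fun v => v k) := h.eq_var 0 (k + 1)

theorem dre (h : DS D) (σ : ℕ → ℕ) {t : Env → ℤ} (ht : DF D t) :
    DF D (fun v => t (fun i => v (σ i))) :=
  h.re (fun k => if k = 0 then 0 else σ (k - 1) + 1) ht

theorem fapp (h : DS D) {A : ℤ → Env → Prop} (hA : Fam D A) {t : Env → ℤ} (ht : DF D t)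
    (σ : ℕ → ℕ) : D (fun v => A (t v) (fun i => v (σ i))) := by
  have h1 : D (fun v => A (v 0) (fun i => v (σ i + 1))) :=
    h.re (fun k => if k = 0 then 0 else σ (k - 1) + 1) hA
  refine congr' (h.ex (p := fun y v => y = t v ∧ A y (fun i => v (σ i))) (h.and ht h1)) ?_
  intro v; simp

theorem add (h : DS D) {s t : Env → ℤ} (hs : DF D s) (ht : DF D t) :
    DF D (fun v => s v + t v) := by
  have h1 : D (fun v => v 0 = s (fun i => v (i + 3))) :=
    h.re (fun k => if k = 0 then 0 else k + 2) hs
  have h2 : D (fun v => v 1 = t (fun i => v (i + 3))) :=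
    h.re (fun k => if k = 0 then 1 else k + 2) ht
  have h3 : D (fun v => v 2 = v 0 + v 1) :=
    h.re (fun k => if k = 0 then 2 else k - 1) h.eq_add
  refine congr' (h.ex (p := fun b v => ∃ a, a = s (fun i => v (i + 1)) ∧
    b = t (fun i => v (i + 1)) ∧ v 0 = a + b) (h.ex (h.and h1 (h.and h2 h3)))) ?_
  intro v; simp

theorem eq (h : DS D) {s t : Env → ℤ} (hs : DF D s) (ht : DF D t) :
    D (fun v => s v = t v) := by
  refine congr' (h.ex (p := fun y v => y = s v ∧ y = t v) (h.and hs ht)) ?_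
  intro v; simp

theorem lt (h : DS D) {s t : Env → ℤ} (hs : DF D s) (ht : DF D t) :
    D (fun v => s v < t v) := by
  have h1 : D (fun v => v 0 = s (fun i => v (i + 2))) :=
    h.re (fun k => if k = 0 then 0 else k + 1) hs
  have h2 : D (fun v => v 1 = t (fun i => v (i + 2))) :=
    h.re (fun k => if k = 0 then 1 else k + 1) ht
  refine congr' (h.ex (p := fun b v => ∃ a, a = s v ∧
    b = t v ∧ a < b) (h.ex (h.and h1 (h.and h2 (h.lt_var 0 1))))) ?_
  intro v; simp

theorem le (h : DS D) {s t : Env → ℤ} (hs : DF D s) (ht : DF D t) :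
    D (fun v => s v ≤ t v) :=
  congr' (h.not (h.lt ht hs)) (fun v => by simp)

theorem gt (h : DS D) {s t : Env → ℤ} (hs : DF D s) (ht : DF D t) :
    D (fun v => s v > t v) := h.lt ht hs

theorem zero (h : DS D) : DF D (fun _ => 0) := by
  refine congr' (h.eq (h.var 0) (h.add (h.var 0) (h.var 0))) ?_
  intro v; beta_reduce; omega

theorem one (h : DS D) : DF D (fun _ => 1) := by
  refine congr' (h.and (h.lt h.zero (h.var 0)) (h.all (p := fun y v => 0 < y → ¬ y < v 0)
    (h.imp (h.lt h.zero (h.var 0)) (h.not (h.lt_var 0 1))))) ?_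
  intro v
  beta_reduce
  constructor
  · rintro ⟨h1, h2⟩
    have := h2 1 (by norm_num)
    omega
  · intro h1
    refine ⟨by omega, fun y hy => by omega⟩

theorem sub (h : DS D) {s t : Env → ℤ} (hs : DF D s) (ht : DF D t) :
    DF D (fun v => s v - t v) := by
  refine congr' (h.eq (h.add (h.var 0) (h.dre (fun i => i + 1) ht)) (h.dre (fun i => i + 1) hs)) ?_
  intro v; beta_reduce; omega

theorem neg (h : DS D) {t : Env → ℤ} (ht : DF D t) :
    DF D (fun v => - t v) := by
  have := h.sub h.zero ht
  simpa using this

theorem mulnat (h : DS D) {t : Env → ℤ} (ht : DF D t) (c : ℕ) :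
    DF D (fun v => (c : ℤ) * t v) := by
  induction c with
  | zero => simpa using h.zero
  | succ n ih =>
    have := h.add ih ht
    convert this using 3
    push_cast; ring

theorem mul (h : DS D) {t : Env → ℤ} (c : ℤ) (ht : DF D t) :
    DF D (fun v => c * t v) := by
  obtain ⟨n, rfl | rfl⟩ := Int.eq_nat_or_neg c
  · exact h.mulnat ht n
  · have := h.neg (h.mulnat ht n)
    convert this using 3
    ring

theorem const (h : DS D) (c : ℤ) : DF D (fun _ => c) := by
  simpa using h.mul c h.one

theorem ffapp (h : DS D) {f : ℤ → Env → ℤ} (hf : FFam D f) {t : Env → ℤ} (ht : DF D t)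
    (σ : ℕ → ℕ) : DF D (fun v => f (t v) (fun i => v (σ i))) := by
  have h1 : D (fun v => v 1 = f (v 0) (fun i => v (σ i + 2))) :=
    h.re (fun k => if k = 0 then 1 else if k = 1 then 0 else σ (k - 2) + 2) hf
  have h2 : D (fun v => v 0 = t (fun i => v (i + 2))) :=
    h.re (fun k => if k = 0 then 0 else k + 1) ht
  refine congr' (h.ex (p := fun y v => y = t (fun i => v (i + 1)) ∧
    v 0 = f y (fun i => v (σ i + 1))) (h.and h2 h1)) ?_
  intro v; simp

theorem exFin (h : DS D) {ι : Type*} (s : Finset ι) {p : ι → Env → Prop}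
    (hp : ∀ i, D (p i)) : D (fun v => ∃ i ∈ s, p i v) := by
  classical
  induction s using Finset.induction_on with
  | empty => simpa using h.not h.tr
  | insert a s ha ih => simpa using h.or (hp a) ih

theorem allFin (h : DS D) {ι : Type*} (s : Finset ι) {p : ι → Env → Prop}
    (hp : ∀ i, D (p i)) : D (fun v => ∀ i ∈ s, p i v) :=
  congr' (h.not (h.exFin s (fun i => h.not (hp i)))) (fun v => by push Not; rfl)

end DS

/-- the conclusion of the inp-pattern argument -/
def Gap (D : (Env → Prop) → Prop) : Prop :=
  ∀ X : ℤ → Env → Prop, Fam D X → ∃ n d : ℕ, 0 < d ∧ ∀ b, (∀ x, X x b → 0 ≤ x) →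
    (∀ x y, X x b → X y b → x < y → x + d ≤ y) →
    ∀ s : Finset ℤ, (∀ x ∈ s, X x b) → s.card ≤ n

theorem encard_le_of_finset {S : Set ℤ} {K : ℕ}
    (h : ∀ s : Finset ℤ, (∀ x ∈ s, x ∈ S) → s.card ≤ K) : S.encard ≤ K := by
  by_contra hc
  push Not at hc
  have h1 : ((K + 1 : ℕ) : ℕ∞) ≤ S.encard := by
    push_cast
    exact Order.add_one_le_of_lt hc
  obtain ⟨t, ht, hte⟩ := Set.exists_subset_encard_eq h1
  have hfin : t.Finite := Set.finite_of_encard_eq_coe hte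
  have := h hfin.toFinset (by intro x hx; exact ht (by simpa using hx))
  rw [hfin.encard_eq_coe_toFinset_card] at hte
  norm_cast at hte
  omega

theorem finset_le_of_encard {S : Set ℤ} {K : ℕ} (h : S.encard ≤ K)
    (s : Finset ℤ) (hs : ∀ x ∈ s, x ∈ S) : s.card ≤ K := by
  have h1 : ((s : Set ℤ)).encard ≤ S.encard := Set.encard_le_encard (by intro x hx; exact hs x hx)
  rw [Set.encard_coe_eq_coe_finsetCard] at h1
  exact_mod_cast h1.trans h

theorem encard_shift {S : Set ℤ} {K : ℕ} (h : S.encard ≤ K) (c : ℤ) :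
    {x | x + c ∈ S}.encard ≤ K := by
  refine le_trans ?_ h
  exact Set.encard_le_encard_of_injOn (f := fun x => x + c) (fun x hx => hx)
    (fun x _ y _ hxy => by simpa using hxy)

theorem encard_union {S T U : Set ℤ} {K L : ℕ} (hS : S.encard ≤ K) (hT : T.encard ≤ L)
    (hU : U ⊆ S ∪ T) : U.encard ≤ (K + L : ℕ) := by
  refine (Set.encard_le_encard hU).trans ((Set.encard_union_le _ _).trans ?_)
  push_cast
  exact add_le_add hS hT

theorem iter {α : Type*} (g : ℤ → α) (P : ℤ) (K : ℕ) (h : {x | g x ≠ g (x + P)}.encard ≤ K)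
    (k : ℕ) : {x | g x ≠ g (x + k * P)}.encard ≤ (k * K : ℕ) := by
  induction k with
  | zero => simp
  | succ n ih =>
    have := encard_union ih (encard_shift h (n * P)) (U := {x | g x ≠ g (x + (n + 1 : ℕ) * P)}) (by
      intro x hx
      by_contra hc
      simp only [Set.mem_union, Set.mem_ofPred_eq, not_or, not_not] at hc hx
      apply hx
      rw [hc.1, hc.2]
      congr 1
      push_cast; ring)
    convert this using 2
    ring

theorem biUnion_le {ι : Type*} (s : Finset ι) (S : ι → Set ℤ) (K : ℕ)
    (h : ∀ i, (S i).encard ≤ K) : {x | ∃ i ∈ s, x ∈ S i}.encard ≤ (s.card * K : ℕ) := by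
  classical
  induction s using Finset.induction_on with
  | empty => simp
  | insert a s ha ih =>
    have := encard_union (h a) ih (U := {x | ∃ i ∈ insert a s, x ∈ S i}) (by
      intro x hx
      simpa using hx)
    rw [Finset.card_insert_of_notMem ha]
    convert this using 2
    ring

/-- Every definable family of subsets of `ℤ` is uniformly almost periodic. -/
theorem periodic (h : DS D) (hg : Gap D) {A : ℤ → Env → Prop} (hA : Fam D A) :
    ∃ P K : ℕ, 0 < P ∧ ∀ b, {x | A x b ≠ A (x + P) b}.encard ≤ K := by
  classical
  have hX : Fam D (fun y e => 0 ≤ y ∧ ∀ t, 0 ≤ t → t < e 1 →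
      (A (e 0 + y + t) (fun i => e (i + 2)) ↔ A (e 0 + t) (fun i => e (i + 2)))) := by
    refine h.and (h.le h.zero (h.var 0)) (h.all ?_)
    refine h.imp (h.le h.zero (h.var 0)) (h.imp (h.lt (h.var 0) (h.var _)) (h.iff ?_ ?_))
    · exact h.fapp hA (h.add (h.add (h.var _) (h.var _)) (h.var 0)) _
    · exact h.fapp hA (h.add (h.var _) (h.var 0)) _
  obtain ⟨n, d, hd, hX⟩ := hg _ hX
  refine ⟨d.factorial, Fintype.card (Fin (d.factorial + 1) → Bool) * n, Nat.factorial_pos _, ?_⟩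
  intro b
  apply encard_le_of_finset
  intro s hs
  by_contra hc
  push Not at hc
  obtain ⟨w, -, hw⟩ := Finset.exists_lt_card_fiber_of_mul_lt_card_of_maps_to
    (f := fun x : ℤ => fun t : Fin (d.factorial + 1) => decide (A (x + t) b))
    (t := Finset.univ) (s := s) (fun a _ => Finset.mem_univ _) hc
  set s' := {x ∈ s | (fun t : Fin (d.factorial + 1) => decide (A (x + t) b)) = w} with hs'
  have hne : s'.Nonempty := by
    rw [← Finset.card_pos]; omega
  set u := s'.min' hne with hu
  have hus : u ∈ s' := s'.min'_mem hne
  have same : ∀ x ∈ s', ∀ t : ℤ, 0 ≤ t → t < d.factorial + 1 → (A (x + t) b ↔ A (u + t) b) := by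
    intro x hx t ht0 ht1
    have h1 := (Finset.mem_filter.1 hx).2
    have h2 := (Finset.mem_filter.1 hus).2
    have h3 := congrFun (h1.trans h2.symm) ⟨t.toNat, by omega⟩
    simp only [decide_eq_decide] at h3
    rwa [Int.toNat_of_nonneg ht0] at h3
  let e : Env := fun k => if k = 0 then u else if k = 1 then d.factorial + 1 else b (k - 2)
  have key := hX e (fun x hx => hx.1)
  simp only [show e 0 = u from rfl, show e 1 = d.factorial + 1 from rfl,
    show (fun i => e (i + 2)) = b from rfl] at key
  by_cases hgap : ∀ x y, (0 ≤ x ∧ ∀ t, 0 ≤ t → t < (d.factorial : ℤ) + 1 → (A (u + x + t) b ↔ A (u + t) b)) →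
      (0 ≤ y ∧ ∀ t, 0 ≤ t → t < (d.factorial : ℤ) + 1 → (A (u + y + t) b ↔ A (u + t) b)) →
      x < y → x + d ≤ y
  · have h1 := key hgap (s'.image (fun x => x - u)) (by
      intro y hy
      obtain ⟨x, hx, rfl⟩ := Finset.mem_image.1 hy
      have := s'.min'_le x hx
      refine ⟨by omega, fun t h0 h1 => ?_⟩
      rw [show u + (x - u) + t = x + t by ring]
      exact same x hx t h0 h1)
    rw [Finset.card_image_of_injective _ (fun x y hxy => by simpa using hxy)] at h1
    omega
  · push Not at hgap
    obtain ⟨x, y, ⟨hx0, hx⟩, ⟨hy0, hy⟩, hxy, hyx⟩ := hgap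
    obtain ⟨p, hp⟩ : ∃ p : ℕ, y = x + p := ⟨(y - x).toNat, by omega⟩
    have hp0 : 0 < p := by omega
    have hpd : p ≤ d := by omega
    obtain ⟨k, hk⟩ := Nat.dvd_factorial hp0 hpd
    have step : ∀ j : ℕ, p * j < d.factorial + 1 → (A u b ↔ A (u + (p * j : ℕ)) b) := by
      intro j
      induction j with
      | zero => intro _; simp
      | succ j ih =>
        intro hj
        have h0 : p * j < d.factorial + 1 := by rw [Nat.mul_succ] at hj; omega
        rw [ih h0]
        have e1 := hy (p * j : ℕ) (by positivity) (by exact_mod_cast h0)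
        have e2 := hx (p * (j + 1) : ℕ) (by positivity) (by exact_mod_cast hj)
        rw [← e1, ← e2]
        rw [show u + y + ((p * j : ℕ) : ℤ) = u + x + ((p * (j + 1) : ℕ) : ℤ) by
          rw [hp]; push_cast; ring]
    have h1 := step k (by omega)
    rw [← hk] at h1
    have h2 := hs u (Finset.mem_filter.1 hus).1
    exact h2 (propext h1)

end StrongZ
namespace StrongZ
variable {D : (Env → Prop) → Prop}

/-- Bounding positive jumps. -/
theorem jump_bound (h : DS D) (hg : Gap D) {f : ℤ → Env → ℤ} (hf : FFam D f) (Q K : ℕ) (hQ : 0 < Q)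
    (hK : ∀ b, {x | (f (x + Q) b > f x b) ≠ (f (x + Q + Q) b > f (x + Q) b)}.encard ≤ K) :
    ∃ C K' : ℕ, ∀ b, {x | f (x + Q) b - f x b > C}.encard ≤ K' := by
  classical
  have hIm : Fam D (fun y e => ∃ k, 0 ≤ k ∧ e 0 + Q * k ≤ e 1 ∧
      y = f (e 0 + Q * k) (fun i => e (i + 2))) := by
    refine h.ex ?_
    refine h.and (h.le h.zero (h.var 0)) (h.and ?_ ?_)
    · exact h.le (h.add (h.var _) (h.mul _ (h.var _))) (h.var _)
    · exact h.eq (h.var _) (h.ffapp hf (h.add (h.var _) (h.mul _ (h.var _))) _)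
  obtain ⟨P, K1, hP, hK1⟩ := periodic h hg hIm
  refine ⟨P, (Q * (K + 1)) * K1, fun b => ?_⟩
  apply encard_le_of_finset
  intro s hs
  by_contra hc
  push Not at hc
  have hE := hK b
  set E := {x | (f (x + Q) b > f x b) ≠ (f (x + Q + Q) b > f (x + Q) b)} with hEdef
  have hEfin : E.Finite := Set.finite_of_encard_le_coe hE
  have hEcard : hEfin.toFinset.card ≤ K :=
    finset_le_of_encard hE _ (by intro x hx; simpa using hx)
  obtain ⟨⟨r, c⟩, -, hw⟩ := Finset.exists_lt_card_fiber_of_mul_lt_card_of_maps_to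
    (f := fun x : ℤ => ((x % Q).toNat, {e ∈ hEfin.toFinset | e < x}.card))
    (t := Finset.range Q ×ˢ Finset.range (K + 1)) (s := s) (n := K1) (by
      intro x _
      simp only [Finset.mem_product, Finset.mem_range]
      constructor
      · have h1 := Int.emod_lt_of_pos x (show (0 : ℤ) < Q by exact_mod_cast hQ)
        have h2 := Int.emod_nonneg x (show (Q : ℤ) ≠ 0 by omega)
        omega
      · have := Finset.card_filter_le hEfin.toFinset (fun e => e < x)
        omega) (by simpa using hc)
  set s' : Finset ℤ := {x ∈ s | ((x % (Q : ℤ)).toNat, {e ∈ hEfin.toFinset | e < x}.card) = (r, c)} with hs'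
  have hne : s'.Nonempty := by
    rw [← Finset.card_pos]; omega
  set u := s'.min' hne with hu
  have hus : u ∈ s' := s'.min'_mem hne
  set z := s'.max' hne with hz
  have hzs : z ∈ s' := s'.max'_mem hne
  have huz : u ≤ z := s'.min'_le z hzs
  have hQz : (0 : ℤ) < Q := by exact_mod_cast hQ
  have form : ∀ x ∈ s', ∃ k : ℕ, x = u + Q * k := by
    intro x hx
    have h1 := (Finset.mem_filter.1 hx).2
    have h2 := (Finset.mem_filter.1 hus).2
    simp only [Prod.mk.injEq] at h1 h2
    have h3 := Int.emod_nonneg x (show (Q : ℤ) ≠ 0 by omega)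
    have h4 := Int.emod_nonneg u (show (Q : ℤ) ≠ 0 by omega)
    have h5 : u % Q = x % Q := by omega
    obtain ⟨k, hk⟩ := (Int.modEq_iff_dvd.1 h5)
    have h6 := s'.min'_le x hx
    have hk0 : 0 ≤ k := by
      by_contra hneg
      have : (Q : ℤ) * k < 0 := mul_neg_of_pos_of_neg hQz (by omega)
      omega
    refine ⟨k.toNat, ?_⟩
    rw [Int.toNat_of_nonneg hk0]
    omega
  have noE : ∀ e ∈ E, u ≤ e → e < z → False := by
    intro e he h1 h2
    have c1 := (Finset.mem_filter.1 hus).2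
    have c2 := (Finset.mem_filter.1 hzs).2
    simp only [Prod.mk.injEq] at c1 c2
    have : {e ∈ hEfin.toFinset | e < u}.card < {e ∈ hEfin.toFinset | e < z}.card := by
      apply Finset.card_lt_card
      refine ⟨fun a ha => ?_, fun hsub => ?_⟩
      · rw [Finset.mem_filter] at ha ⊢
        exact ⟨ha.1, by omega⟩
      · have := hsub (Finset.mem_filter.2 ⟨by simpa using he, h2⟩)
        rw [Finset.mem_filter] at this
        omega
    omega
  have inc : ∀ k : ℕ, u + Q * k ≤ z → f (u + Q * k + Q) b > f (u + Q * k) b := by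
    intro k
    induction k with
    | zero =>
      intro _
      have := hs u (Finset.mem_filter.1 hus).1
      simp only [Set.mem_ofPred_eq] at this
      simp only [Nat.cast_zero, mul_zero, add_zero]
      omega
    | succ k ih =>
      intro hk
      push_cast at hk ⊢
      have h1 : u + Q * (k : ℤ) < z := by nlinarith
      have h2 := ih h1.le
      have h3 : ¬ (u + Q * (k : ℤ)) ∈ E := fun he => noE _ he (by nlinarith) h1
      simp only [hEdef, Set.mem_ofPred_eq, not_not] at h3
      have h4 := h3 ▸ h2
      rw [show u + Q * ((k : ℤ) + 1) = u + Q * k + Q by ring]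
      exact h4
  have mono : ∀ j k : ℕ, j < k → u + Q * k ≤ z + Q →
      f (u + Q * (j + 1 : ℕ)) b ≤ f (u + Q * k) b := by
    intro j k hjk
    induction k, hjk using Nat.le_induction with
    | base => intro _; exact le_rfl
    | succ k hk ih =>
      intro hz
      push_cast at hz
      have h1 := inc k (by nlinarith)
      have h2 := ih (by nlinarith)
      push_cast at h1 h2 ⊢
      rw [show u + Q * ((k : ℤ) + 1) = u + Q * k + Q by ring]
      omega
  have mono2 : ∀ j k : ℕ, j < k → u + Q * k ≤ z + Q → f (u + Q * j) b < f (u + Q * k) b := by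
    intro j k hjk hk
    have h1 := mono j k hjk hk
    have h2 := inc j (by
      have : (Q : ℤ) * (j + 1) ≤ Q * k := by
        apply mul_le_mul_of_nonneg_left _ hQz.le
        exact_mod_cast hjk
      nlinarith)
    push_cast at h1
    rw [show u + Q * ((j : ℤ) + 1) = u + Q * j + Q by ring] at h1
    omega
  let e : Env := fun k => if k = 0 then u else if k = 1 then z + Q else b (k - 2)
  have key := hK1 e
  simp only [show e 0 = u from rfl, show e 1 = z + Q from rfl,
    show (fun i => e (i + 2)) = b from rfl] at key
  have inj : Set.InjOn (fun x => f x b) (s' : Set ℤ) := by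
    intro x hx y hy hxy
    have hxz := s'.le_max' x hx
    have hyz := s'.le_max' y hy
    obtain ⟨j, rfl⟩ := form x hx
    obtain ⟨k, rfl⟩ := form y hy
    simp only at hxy
    rcases lt_trichotomy j k with hjk | hjk | hjk
    · have := mono2 j k hjk (by omega)
      omega
    · rw [hjk]
    · have := mono2 k j hjk (by omega)
      omega
  have hcard := finset_le_of_encard key (s'.image (fun x => f x b)) (by
    intro y hy
    obtain ⟨x, hx, rfl⟩ := Finset.mem_image.1 hy
    have hxz := s'.le_max' x hx
    have hjump := hs x (Finset.mem_filter.1 hx).1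
    obtain ⟨j, rfl⟩ := form x hx
    simp only [Set.mem_ofPred_eq] at hjump
    simp only [Set.mem_ofPred_eq]
    intro heq
    have hl : ∃ k : ℤ, 0 ≤ k ∧ u + Q * k ≤ z + Q ∧ f (u + Q * j) b = f (u + Q * k) b :=
      ⟨j, by positivity, by omega, rfl⟩
    rw [heq] at hl
    obtain ⟨k, hk0, hk1, hk2⟩ := hl
    lift k to ℕ using hk0
    rcases lt_trichotomy j k with hjk | hjk | hjk
    · have := mono j k hjk hk1
      push_cast at this
      rw [show u + Q * ((j : ℤ) + 1) = u + Q * j + Q by ring] at this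
      omega
    · subst hjk
      omega
    · have := mono2 k j hjk (by omega)
      omega)
  rw [Finset.card_image_of_injOn inj] at hcard
  omega

theorem sums (f : ℤ → ℤ) (Q M : ℤ) (C K K' : ℕ)
    (h1 : {x | f (x + Q) - f x ≠ f (x + M + Q) - f (x + M)}.encard ≤ K)
    (h2 : {x | |f (x + Q) - f x| > C}.encard ≤ K') (k : ℕ) :
    {x | f (x + k * Q) - f x ≠ f (x + M + k * Q) - f (x + M)}.encard ≤ (k * K : ℕ) ∧
    {x | |f (x + k * Q) - f x| > (k * C : ℕ)}.encard ≤ (k * K' : ℕ) := by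
  induction k with
  | zero => simp
  | succ n ih =>
    constructor
    · have := encard_union ih.1 (encard_shift h1 (n * Q))
        (U := {x | f (x + (n + 1 : ℕ) * Q) - f x ≠ f (x + M + (n + 1 : ℕ) * Q) - f (x + M)}) (by
        intro x hx
        by_contra hc
        simp only [Set.mem_union, Set.mem_ofPred_eq, not_or, not_not] at hc hx
        apply hx
        obtain ⟨c1, c2⟩ := hc
        rw [show x + (n + 1 : ℕ) * Q = x + n * Q + Q by push_cast; ring,
          show x + M + (n + 1 : ℕ) * Q = x + n * Q + M + Q by push_cast; ring]
        rw [show x + n * Q + M = x + M + n * Q by ring] at c2 ⊢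
        omega)
      convert this using 2
      ring
    · have := encard_union ih.2 (encard_shift h2 (n * Q))
        (U := {x | |f (x + (n + 1 : ℕ) * Q) - f x| > ((n + 1) * C : ℕ)}) (by
        intro x hx
        by_contra hc
        simp only [Set.mem_union, Set.mem_ofPred_eq, not_or, not_lt, gt_iff_lt] at hc hx
        obtain ⟨c1, c2⟩ := hc
        rw [show x + (n + 1 : ℕ) * Q = x + n * Q + Q by push_cast; ring] at hx
        push_cast at hx c1
        have := abs_add_le (f (x + n * Q + Q) - f (x + n * Q)) (f (x + n * Q) - f x)
        rw [show f (x + n * Q + Q) - f (x + n * Q) + (f (x + n * Q) - f x)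
          = f (x + n * Q + Q) - f x by ring] at this
        linarith)
      convert this using 2
      ring

theorem two_diff (h : DS D) (hg : Gap D) {f : ℤ → Env → ℤ} (hf : FFam D f) :
    ∃ Q C K : ℕ, 0 < Q ∧ ∀ b, {x | f (x + Q) b - f x b ≠ f (x + Q + Q) b - f (x + Q) b ∨
      |f (x + Q) b - f x b| > C}.encard ≤ K := by
  have hA1 : Fam D (fun x e => f (x + e 0) (fun i => e (i + 1)) > f x (fun i => e (i + 1))) :=
    h.gt (h.ffapp hf (h.add (h.var _) (h.var _)) _) (h.ffapp hf (h.var _) _)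
  have hA2 : Fam D (fun x e => -f (x + e 0) (fun i => e (i + 1)) > -f x (fun i => e (i + 1))) :=
    h.gt (h.neg (h.ffapp hf (h.add (h.var _) (h.var _)) _)) (h.neg (h.ffapp hf (h.var _) _))
  obtain ⟨P1, K1, hP1, hK1⟩ := periodic h hg hA1
  obtain ⟨P2, K2, hP2, hK2⟩ := periodic h hg hA2
  set Q := P1 * P2 with hQdef
  have hQ : 0 < Q := Nat.mul_pos hP1 hP2
  have hf' : FFam D (fun x b => - f x b) := by
    have := h.neg (h.ffapp hf (h.var 0) (fun i => i + 1))
    exact this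
  obtain ⟨C1, L1, hL1⟩ := jump_bound h hg hf Q (P2 * K1) hQ (by
    intro b
    let e : Env := fun k => if k = 0 then (Q : ℤ) else b (k - 1)
    have := iter _ _ _ (hK1 e) P2
    simp only [show e 0 = Q from rfl, show (fun i => e (i + 1)) = b from rfl] at this
    convert this using 3
    rw [show ((P2 : ℤ) * P1) = Q by rw [hQdef]; push_cast; ring])
  obtain ⟨C2, L2, hL2⟩ := jump_bound h hg hf' Q (P1 * K2) hQ (by
    intro b
    let e : Env := fun k => if k = 0 then (Q : ℤ) else b (k - 1)
    have := iter _ _ _ (hK2 e) P1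
    simp only [show e 0 = Q from rfl, show (fun i => e (i + 1)) = b from rfl] at this
    convert this using 3
    rw [show ((P1 : ℤ) * P2) = Q by rw [hQdef]; push_cast; ring])
  set C := max C1 C2 with hC
  have hbd : ∀ b, {x | |f (x + Q) b - f x b| > C}.encard ≤ (L1 + L2 : ℕ) := by
    intro b
    refine encard_union (hL1 b) (hL2 b) ?_
    intro x hx
    simp only [Set.mem_union, Set.mem_ofPred_eq, gt_iff_lt, lt_abs] at hx ⊢
    omega
  have hA3 : Fam D (fun x e => f (x + Q) (fun i => e (i + 1)) - f x (fun i => e (i + 1)) = e 0) :=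
    h.eq (h.sub (h.ffapp hf (h.add (h.var _) (h.const _)) _) (h.ffapp hf (h.var _) _)) (h.var _)
  obtain ⟨P, K3, hP, hK3⟩ := periodic h hg hA3
  have hper : ∀ b, {x | f (x + Q) b - f x b ≠ f (x + P + Q) b - f (x + P) b}.encard ≤
      (L1 + L2 + (Finset.Icc (-C : ℤ) C).card * K3 : ℕ) := by
    intro b
    have hu := biUnion_le (Finset.Icc (-C : ℤ) C)
      (fun c => {x | (f (x + Q) b - f x b = c) ≠ (f (x + P + Q) b - f (x + P) b = c)}) K3 (by
        intro c
        let e : Env := fun k => if k = 0 then c else b (k - 1)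
        have := hK3 e
        simpa only [show e 0 = c from rfl, show (fun i => e (i + 1)) = b from rfl] using this)
    refine encard_union (hbd b) hu ?_
    intro x hx
    simp only [Set.mem_union, Set.mem_ofPred_eq] at hx ⊢
    by_cases hb : |f (x + Q) b - f x b| > C
    · exact Or.inl hb
    · right
      push Not at hb
      refine ⟨f (x + Q) b - f x b, by rw [Finset.mem_Icc]; exact abs_le.1 hb, ?_⟩
      intro hcon
      have : f (x + P + Q) b - f (x + P) b = f (x + Q) b - f x b := by rw [← hcon]
      exact hx this.symm
  refine ⟨P * Q, P * C, P * (Q * (L1 + L2 + (Finset.Icc (-C : ℤ) C).card * K3)) + P * (L1 + L2),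
    Nat.mul_pos hP hQ, fun b => ?_⟩
  have hit := iter (fun x => f (x + Q) b - f x b) P _ (hper b) Q
  obtain ⟨s1, s2⟩ := sums (fun x => f x b) Q (P * Q : ℕ) C _ _ (by
    convert hit using 4
    push_cast
    rw [mul_comm (P : ℤ)]) (hbd b) P
  refine encard_union s1 s2 ?_
  intro x hx
  simp only [Set.mem_union, Set.mem_ofPred_eq] at hx ⊢
  push_cast at hx ⊢
  exact hx

end StrongZ
namespace StrongZ
variable {D : (Env → Prop) → Prop}

def Dep {α : Type*} (n : ℕ) (F : Env → α) : Prop :=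
  ∀ v w : Env, (∀ i < n, v i = w i) → F v = F w

open Classical in
noncomputable def minOf (S : ℤ → Prop) : ℤ :=
  if h : ∃ x, S x ∧ ∀ y, S y → x ≤ y then h.choose else 0

theorem minOf_spec (S : ℤ → Prop) (z : ℤ) : z = minOf S ↔
    (S z ∧ ∀ y, S y → z ≤ y) ∨ (¬ (∃ x, S x ∧ ∀ y, S y → x ≤ y) ∧ z = 0) := by
  unfold minOf
  by_cases h : ∃ x, S x ∧ ∀ y, S y → x ≤ y
  · rw [dif_pos h]
    have := h.choose_spec
    constructor
    · rintro rfl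
      exact Or.inl this
    · rintro (h1 | h1)
      · exact le_antisymm (h1.2 _ this.1) (this.2 _ h1.1)
      · exact absurd h h1.1
  · rw [dif_neg h]
    constructor
    · intro h0
      exact Or.inr ⟨h, h0⟩
    · rintro (h1 | h1)
      · exact absurd ⟨z, h1⟩ h
      · exact h1.2

theorem enum (h : DS D) (n K : ℕ) : ∀ (B : ℤ → Env → Prop), Fam D B →
    (∀ b, {x | B x b}.encard ≤ K) → Dep n (fun b x => B x b) →
    ∃ e : ℕ → Env → ℤ, (∀ i, DF D (e i)) ∧ (∀ i, Dep n (e i)) ∧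
      ∀ b x, B x b → ∃ i < K, e i b = x := by
  induction K with
  | zero =>
    intro B _ hB _
    refine ⟨fun _ _ => 0, fun _ => h.zero, fun _ _ _ _ => rfl, fun b x hx => ?_⟩
    have := hB b
    simp only [Nat.cast_zero, nonpos_iff_eq_zero, Set.encard_eq_zero] at this
    have h2 : x ∈ {x | B x b} := hx
    rw [this] at h2
    exact absurd h2 (Set.notMem_empty x)
  | succ K ih =>
    intro B hD hB hdep
    let e0 : Env → ℤ := fun b => minOf (fun x => B x b)
    have he0 : DF D e0 := by
      have h1 : D (fun v => (B (v 0) (fun i => v (i + 1)) ∧ ∀ y, B y (fun i => v (i + 1)) → v 0 ≤ y) ∨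
          (¬ (∃ x, B x (fun i => v (i + 1)) ∧ ∀ y, B y (fun i => v (i + 1)) → x ≤ y) ∧ v 0 = 0)) := by
        refine h.or (h.and hD (h.all ?_)) (h.and (h.not (h.ex ?_)) (h.eq (h.var 0) h.zero))
        · exact h.imp (h.fapp hD (h.var 0) _) (h.le (h.var _) (h.var 0))
        · refine h.and (h.fapp hD (h.var 0) _) (h.all ?_)
          exact h.imp (h.fapp hD (h.var 0) _) (h.le (h.var _) (h.var 0))
      exact DS.congr' h1 (fun v => (minOf_spec (fun x => B x (fun i => v (i + 1))) (v 0)).symm)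
    have hde0 : Dep n e0 := by
      intro v w hvw
      have := hdep v w hvw
      simp only at this
      simp only [e0]
      rw [this]
    have hmin : ∀ b x, B x b → B (e0 b) b := by
      intro b x hx
      have hfin : {x | B x b}.Finite := Set.finite_of_encard_le_coe (hB b)
      obtain ⟨z, hz, hz2⟩ := Set.exists_min_image _ id hfin ⟨x, hx⟩
      have : z = e0 b := (minOf_spec _ _).2 (Or.inl ⟨hz, fun y hy => hz2 y hy⟩)
      rw [← this]; exact hz
    obtain ⟨e, h1, h2, h3⟩ := ih (fun x b => B x b ∧ x ≠ e0 b)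
      (h.and hD (h.not (h.eq (h.var 0) (h.dre (fun i => i + 1) he0)))) (by
        intro b
        by_cases hne : ∃ x, B x b
        · obtain ⟨x, hx⟩ := hne
          have h4 := Set.encard_sdiff_singleton_add_one (s := {x | B x b}) (hmin b x hx)
          have h5 : {x | B x b ∧ x ≠ e0 b} = {x | B x b} \ {e0 b} := by
            ext y; simp
          rw [h5]
          have h6 := hB b
          rw [← h4] at h6
          push_cast at h6
          exact (ENat.add_le_add_iff_right ENat.one_ne_top).1 h6
        · push Not at hne
          have : {x | B x b ∧ x ≠ e0 b} = ∅ := by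
            ext y; simp [hne]
          rw [this]; simp) (by
        intro v w hvw
        have e1 := hdep v w hvw
        have e2 := hde0 v w hvw
        funext x
        have e3 := congrFun e1 x
        simp only at e3
        simp only [e3, e2])
    refine ⟨fun i => if i = 0 then e0 else e (i - 1), ?_, ?_, ?_⟩
    · intro i
      by_cases hi : i = 0
      · simpa [hi] using he0
      · simpa [hi] using h1 (i - 1)
    · intro i
      by_cases hi : i = 0
      · simpa [hi] using hde0
      · simpa [hi] using h2 (i - 1)
    · intro b x hx
      by_cases hxe : x = e0 b
      · exact ⟨0, by omega, by simp [hxe]⟩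
      · obtain ⟨i, hi, hi2⟩ := h3 b x ⟨hx, hxe⟩
        exact ⟨i + 1, by omega, by simpa using hi2⟩

/-- linear progress -/
theorem progress (f : ℤ → ℤ) (Q : ℕ) (x : ℤ) (k : ℕ)
    (h : ∀ j : ℕ, j < k → f (x + j * Q + Q) - f (x + j * Q) =
      f (x + j * Q + Q + Q) - f (x + j * Q + Q)) :
    f (x + k * Q) = f x + k * (f (x + Q) - f x) ∧
    f (x + k * Q + Q) - f (x + k * Q) = f (x + Q) - f x := by
  induction k with
  | zero => simp
  | succ k ih =>
    obtain ⟨h1, h2⟩ := ih (fun j hj => h j (by omega))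
    have h3 := h k (by omega)
    push_cast
    rw [show x + ((k : ℤ) + 1) * Q = x + k * Q + Q by ring]
    constructor
    · linarith
    · linarith

def cons (x : ℤ) (b : Env) : Env := fun k => if k = 0 then x else b (k - 1)

theorem cons_eta (v : Env) : cons (v 0) (fun i => v (i + 1)) = v := by
  funext k
  unfold cons
  split_ifs with hk
  · rw [hk]
  · show v (k - 1 + 1) = v k
    congr 1; omega

theorem main {P : (Env → Prop) → Prop} (h : DS D) (hg : Gap D) (hP : DS P) (n : ℕ) :
    ∀ F : Env → ℤ, DF D F → Dep n F → DF P F := by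
  induction n with
  | zero =>
    intro F _ hdep
    have : F = fun _ => F 0 := by
      funext v
      exact hdep v 0 (fun i hi => by omega)
    rw [this]
    exact hP.const _
  | succ n ih =>
    intro F hF hdep
    let f : ℤ → Env → ℤ := fun x b => F (cons x b)
    have hf : FFam D f := by
      refine DS.congr' hF (fun v => ?_)
      simp only [f]
      have := cons_eta (fun i => v (i + 1))
      simp only [zero_add] at this
      rw [← this]
    have hfdep : ∀ v w : Env, (∀ i < n, v i = w i) → ∀ x, f x v = f x w := by
      intro v w hvw x
      apply hdep
      intro i hi
      unfold cons
      split_ifs with h0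
      · rfl
      · exact hvw _ (by omega)
    obtain ⟨Q, C, K, hQ, hK⟩ := two_diff h hg hf
    have hBfam : Fam D (fun x b => f (x + Q) b - f x b ≠ f (x + Q + Q) b - f (x + Q) b ∨
      |f (x + Q) b - f x b| > C) := by
      have t0 := h.ffapp hf (h.var 0) (fun i => i + 1)
      have t1 := h.ffapp hf (h.add (h.var 0) (h.const Q)) (fun i => i + 1)
      have t2 := h.ffapp hf (h.add (h.add (h.var 0) (h.const Q)) (h.const Q)) (fun i => i + 1)
      have := h.or (h.not (h.eq (h.sub t1 t0) (h.sub t2 t1)))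
        (h.or (h.gt (h.sub t1 t0) (h.const C)) (h.gt (h.neg (h.sub t1 t0)) (h.const C)))
      refine DS.congr' this (fun v => ?_)
      simp only [gt_iff_lt, lt_abs, ne_eq]
    obtain ⟨e', he1, he2, he3⟩ := enum h n K _ hBfam hK (by
      intro v w hvw
      funext x
      simp only [hfdep v w hvw])
    let e : ℕ → Env → ℤ := fun i => if i < K then e' i else fun _ => 0
    have heD : ∀ i, DF D (e i) := by
      intro i
      simp only [e]
      split_ifs
      · exact he1 i
      · exact h.zero
    have heDep : ∀ i, Dep n (e i) := by
      intro i
      simp only [e]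
      split_ifs
      · exact he2 i
      · intro _ _ _; rfl
    have heB : ∀ b x, (∀ i ∈ Finset.range (K + 1), x ≠ e i b) →
        f (x + Q) b - f x b = f (x + Q + Q) b - f (x + Q) b ∧ |f (x + Q) b - f x b| ≤ C := by
      intro b x hx
      by_contra hc
      obtain ⟨i, hi, hie⟩ := he3 b x (by
        by_cases hh : f (x + Q) b - f x b = f (x + Q + Q) b - f (x + Q) b
        · right
          by_contra hh2
          exact hc ⟨hh, by omega⟩
        · exact Or.inl hh)
      refine hx i (Finset.mem_range.2 (by omega)) ?_
      simp only [e, if_pos hi, hie]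
    have heP : ∀ i, DF P (e i) := fun i => ih _ (heD i) (heDep i)
    have hGP : ∀ i (r : ℤ), DF P (fun b => f (e i b + r) b) := by
      intro i r
      refine ih _ (h.ffapp hf (h.add (heD i) (h.const r)) (fun i => i)) ?_
      intro v w hvw
      simp only [heDep i v w hvw, hfdep v w hvw]
    have hQz : (0 : ℤ) < Q := by exact_mod_cast hQ
    -- the explicit Presburger description
    have hdes : ∀ b x y, (∃ i ∈ Finset.range (K + 1), ∃ r ∈ Finset.Icc (-Q : ℤ) Q,
        ((∀ j ∈ Finset.range (K + 1), (e i b + r ≤ e j b → ¬ e j b < x) ∧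
          (x ≤ e j b → ¬ e j b < e i b + r)) ∧
        ((x = e i b + r ∧ y = f (e i b + r) b) ∨ ∃ c ∈ Finset.Icc (-C : ℤ) C,
          (f (e i b + (r + Q)) b - f (e i b + r) b = c ∧
            ∃ k : ℤ, x = e i b + r + Q * k ∧ y = f (e i b + r) b + c * k)))) ↔ y = f x b := by
      intro b x y
      have up : ∀ (a : ℤ) (k : ℕ), (∀ j ∈ Finset.range (K + 1), a ≤ e j b → ¬ e j b < a + k * Q) →
          f (a + k * Q) b = f a b + k * (f (a + Q) b - f a b) ∧
          f (a + k * Q + Q) b - f (a + k * Q) b = f (a + Q) b - f a b ∧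
          (0 < k → |f (a + Q) b - f a b| ≤ C) := by
        intro a k hno
        have h1 : ∀ j : ℕ, j < k → ∀ i ∈ Finset.range (K + 1), a + j * Q ≠ e i b := by
          intro j hj i hi heq
          have h2 : (j : ℤ) * Q < k * Q := by
            apply mul_lt_mul_of_pos_right _ hQz
            exact_mod_cast hj
          have h3 : (0 : ℤ) ≤ j * Q := by positivity
          exact hno i hi (by omega) (by omega)
        obtain ⟨p1, p2⟩ := progress (fun x => f x b) Q a k (fun j hj => (heB b _ (h1 j hj)).1)
        refine ⟨p1, p2, fun hk => ?_⟩
        have := (heB b _ (h1 0 hk)).2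
        simpa using this
      constructor
      · rintro ⟨i, hi, r, hr, hno, (⟨rfl, rfl⟩ | ⟨c, hc, hcc, k, hx, hy⟩)⟩
        · rfl
        · set a := e i b + r with ha
          rw [← add_assoc, ← ha] at hcc
          rcases le_total 0 k with hk | hk
          · lift k to ℕ using hk
            rw [hx] at hno
            obtain ⟨u1, u2, u3⟩ := up a k (fun j hj => by
              rw [mul_comm (k : ℤ)]; exact (hno j hj).1)
            rw [hy, hx, mul_comm (Q : ℤ), u1, hcc]
            ring
          · obtain ⟨k', hk'⟩ : ∃ k' : ℕ, k = -k' := ⟨(-k).toNat, by omega⟩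
            have hxa : a = x + k' * Q := by rw [hx, hk']; ring
            obtain ⟨u1, u2, u3⟩ := up x k' (fun j hj => by
              rw [← hxa]; exact (hno j hj).2)
            rw [← hxa] at u1 u2
            rw [hy, hk', ← hcc, u2, u1]
            ring
      · rintro rfl
        by_cases hlow : ∃ i ∈ Finset.range (K + 1), e i b < x
        · obtain ⟨i0, hi0, hi0x⟩ := hlow
          obtain ⟨i, hi, hmax⟩ := Finset.exists_max_image
            {i ∈ Finset.range (K + 1) | e i b < x} (fun i => e i b) ⟨i0, by simp [hi0x]; simpa using hi0⟩
          rw [Finset.mem_filter] at hi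
          set k := (x - e i b - 1) / Q with hk
          have hk0 : 0 ≤ k := Int.ediv_nonneg (by omega) hQz.le
          have hdm := Int.emod_add_mul_ediv (x - e i b - 1) Q
          have hm0 := Int.emod_nonneg (x - e i b - 1) hQz.ne'
          have hm1 := Int.emod_lt_of_pos (x - e i b - 1) hQz
          rw [← hk] at hdm
          set r := (x - e i b - 1) % Q + 1 with hr
          have hxr : x = e i b + r + Q * k := by omega
          have hQk : 0 ≤ Q * k := by positivity
          have hno : ∀ j ∈ Finset.range (K + 1), (e i b + r ≤ e j b → ¬ e j b < x) ∧
              (x ≤ e j b → ¬ e j b < e i b + r) := by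
            intro j hj
            refine ⟨fun h1 h2 => ?_, fun h1 h2 => by omega⟩
            have := hmax j (Finset.mem_filter.2 ⟨hj, h2⟩)
            omega
          refine ⟨i, hi.1, r, Finset.mem_Icc.2 ⟨by omega, by omega⟩, hno, ?_⟩
          clear_value k
          lift k to ℕ using hk0
          obtain ⟨u1, u2, u3⟩ := up (e i b + r) k (fun j hj => by
            rw [mul_comm (k : ℤ), ← hxr]; exact (hno j hj).1)
          rcases Nat.eq_zero_or_pos k with hkz | hkp
          · left
            subst hkz
            have : x = e i b + r := by simpa using hxr
            exact ⟨this, by rw [← this]⟩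
          · right
            refine ⟨_, Finset.mem_Icc.2 (abs_le.1 (u3 hkp)), by rw [← add_assoc], k, hxr, ?_⟩
            rw [hxr, mul_comm (Q : ℤ), u1]
            ring
        · push Not at hlow
          obtain ⟨i, hi, hmin⟩ := Finset.exists_min_image
            (Finset.range (K + 1)) (fun i => e i b) ⟨0, by simp⟩
          have hix := hlow i hi
          set k := (e i b - x) / Q with hk
          have hk0 : 0 ≤ k := Int.ediv_nonneg (by omega) hQz.le
          have hdm := Int.emod_add_mul_ediv (e i b - x) Q
          have hm0 := Int.emod_nonneg (e i b - x) hQz.ne'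
          have hm1 := Int.emod_lt_of_pos (e i b - x) hQz
          rw [← hk] at hdm
          obtain ⟨r, hr⟩ : ∃ r, r = -((e i b - x) % Q) := ⟨_, rfl⟩
          have hxr : e i b + r = x + Q * k := by omega
          have hQk : 0 ≤ Q * k := by positivity
          have hno : ∀ j ∈ Finset.range (K + 1), (e i b + r ≤ e j b → ¬ e j b < x) ∧
              (x ≤ e j b → ¬ e j b < e i b + r) := by
            intro j hj
            have := hmin j hj
            refine ⟨fun h1 h2 => by omega, fun h1 h2 => by omega⟩
          refine ⟨i, hi, r, Finset.mem_Icc.2 ⟨by omega, by omega⟩, hno, ?_⟩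
          clear_value k
          lift k to ℕ using hk0
          obtain ⟨u1, u2, u3⟩ := up x k (fun j hj => by
            rw [mul_comm (k : ℤ), ← hxr]; exact (hno j hj).2)
          rw [mul_comm (k : ℤ), ← hxr] at u1 u2
          rcases Nat.eq_zero_or_pos k with hkz | hkp
          · left
            subst hkz
            have : x = e i b + r := by simpa using hxr.symm
            exact ⟨this, by rw [← this]⟩
          · right
            refine ⟨_, Finset.mem_Icc.2 (abs_le.1 (u3 hkp)), ?_, -k, ?_, ?_⟩
            · rw [← u2, add_assoc]
            · rw [hxr]; ring
            · rw [u1]; ring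
    have hfin : P (fun v => ∃ i ∈ Finset.range (K + 1), ∃ r ∈ Finset.Icc (-Q : ℤ) Q,
        ((∀ j ∈ Finset.range (K + 1),
          (e i (fun i => v (i + 2)) + r ≤ e j (fun i => v (i + 2)) → ¬ e j (fun i => v (i + 2)) < v 1) ∧
          (v 1 ≤ e j (fun i => v (i + 2)) → ¬ e j (fun i => v (i + 2)) < e i (fun i => v (i + 2)) + r)) ∧
        ((v 1 = e i (fun i => v (i + 2)) + r ∧
            v 0 = f (e i (fun i => v (i + 2)) + r) (fun i => v (i + 2))) ∨
          ∃ c ∈ Finset.Icc (-C : ℤ) C,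
          (f (e i (fun i => v (i + 2)) + (r + Q)) (fun i => v (i + 2)) -
              f (e i (fun i => v (i + 2)) + r) (fun i => v (i + 2)) = c ∧
            ∃ k : ℤ, v 1 = e i (fun i => v (i + 2)) + r + Q * k ∧
              v 0 = f (e i (fun i => v (i + 2)) + r) (fun i => v (i + 2)) + c * k)))) := by
      have E : ∀ i, DF P (fun v => e i (fun i => v (i + 2))) := fun i => hP.dre _ (heP i)
      have E3 : ∀ i, DF P (fun v => e i (fun i => v (i + 2 + 1))) :=
        fun i => hP.dre (fun i => i + 3) (heP i)
      have G : ∀ i r, DF P (fun v => f (e i (fun i => v (i + 2)) + r) (fun i => v (i + 2))) :=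
        fun i r => hP.dre (fun i => i + 2) (hGP i r)
      have G3 : ∀ i r, DF P (fun v => f (e i (fun i => v (i + 2 + 1)) + r) (fun i => v (i + 2 + 1))) :=
        fun i r => hP.dre (fun i => i + 3) (hGP i r)
      refine hP.exFin _ fun i => hP.exFin _ fun r => hP.and (hP.allFin _ fun j => hP.and ?_ ?_)
        (hP.or (hP.and ?_ ?_) (hP.exFin _ fun c => hP.and ?_ (hP.ex (hP.and ?_ ?_))))
      · exact hP.imp (hP.le (hP.add (E i) (hP.const r)) (E j)) (hP.not (hP.lt (E j) (hP.var 1)))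
      · exact hP.imp (hP.le (hP.var 1) (E j)) (hP.not (hP.lt (E j) (hP.add (E i) (hP.const r))))
      · exact hP.eq (hP.var 1) (hP.add (E i) (hP.const r))
      · exact hP.eq (hP.var 0) (G i r)
      · exact hP.eq (hP.sub (G i (r + Q)) (G i r)) (hP.const c)
      · exact hP.eq (hP.var _) (hP.add (hP.add (E3 i) (hP.const r)) (hP.mul _ (hP.var 0)))
      · exact hP.eq (hP.var _) (hP.add (G3 i r) (hP.mul _ (hP.var 0)))
    refine DS.congr' hfin (fun v => ?_)
    rw [hdes]
    simp only [f]
    have := cons_eta (fun i => v (i + 1))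
    simp only [zero_add] at this
    rw [← this]

end StrongZ
namespace StrongZ

section pattern
variable (X : ℤ → Env → Prop)

/-- `c` is the largest element of `X_b` below `r` -/
def Gr (b : Env) (c r : ℤ) : Prop := X c b ∧ c ≤ r ∧ ∀ c', X c' b → c' ≤ r → c' ≤ c

theorem Gr.unique {b : Env} {c c' r : ℤ} (h : Gr X b c r) (h' : Gr X b c' r) : c = c' :=
  le_antisymm (h'.2.2 _ h.1 h.2.1) (h.2.2 _ h'.1 h'.2.1)

def Tr : ℕ → ℤ → Env → ℤ → Prop
  | 0, x, _, r => r = x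
  | a + 1, x, e, r => ∃ r', Tr a x e r' ∧ ∃ c, Gr X (fun i => e (Nat.pair a i)) c r' ∧ r = r' - c

theorem Tr.unique {a : ℕ} {x : ℤ} {e : Env} : ∀ {r r' : ℤ}, Tr X a x e r → Tr X a x e r' → r = r' := by
  induction a with
  | zero => intro r r' h h'; exact h.trans h'.symm
  | succ a ih =>
    rintro r r' ⟨s, hs, c, hc, rfl⟩ ⟨s', hs', c', hc', rfl⟩
    obtain rfl := ih hs hs'
    rw [hc.unique X hc']

def Psi (a : ℕ) (x c : ℤ) (e : Env) : Prop :=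
  ∃ r, Tr X a x e r ∧ Gr X (fun i => e (Nat.pair a i)) c r

theorem Psi.unique {a : ℕ} {x c c' : ℤ} {e : Env} (h : Psi X a x c e) (h' : Psi X a x c' e) :
    c = c' := by
  obtain ⟨r, h1, h2⟩ := h
  obtain ⟨r', h1', h2'⟩ := h'
  obtain rfl := h1.unique X h1'
  exact h2.unique X h2'

variable {X} {D : (Env → Prop) → Prop}

theorem Gr_def (h : DS D) (hX : Fam D X) (σ : ℕ → ℕ) {s t : Env → ℤ} (hs : DF D s) (ht : DF D t) :
    D (fun v => Gr X (fun i => v (σ i)) (s v) (t v)) := by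
  have hs' := h.dre (fun i => i + 1) hs
  have ht' := h.dre (fun i => i + 1) ht
  refine h.and (h.fapp hX hs σ) (h.and (h.le hs ht) (h.all ?_))
  exact h.imp (h.fapp hX (h.var 0) _) (h.imp (h.le (h.var 0) ht') (h.le (h.var 0) hs'))

theorem Tr_def (h : DS D) (hX : Fam D X) (a : ℕ) :
    D (fun v => Tr X a (v 0) (fun i => v (i + 2)) (v 1)) := by
  induction a with
  | zero => exact h.eq (h.var 1) (h.var 0)
  | succ a ih =>
    refine h.ex (h.and ?_ (h.ex (h.and ?_ ?_)))
    · exact h.re (fun k => if k = 0 then 1 else if k = 1 then 0 else k + 1) ih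
    · exact Gr_def h hX (fun i => Nat.pair a i + 2 + 1 + 1) (h.var 0) (h.var 1)
    · exact h.eq (h.var _) (h.sub (h.var _) (h.var 0))

theorem Psi_def (h : DS D) (hX : Fam D X) (a : ℕ) :
    D (fun v => Psi X a (v 0) (v 1) (fun i => v (i + 2))) := by
  refine h.ex (h.and ?_ ?_)
  · exact h.re (fun k => if k = 0 then 1 else if k = 1 then 0 else k + 1) (Tr_def h hX a)
  · exact Gr_def h hX (fun i => Nat.pair a i + 2 + 1) (h.var _) (h.var 0)

theorem build (hbad : ∀ n d : ℕ, 0 < d → ∃ b, (∀ x, X x b → 0 ≤ x) ∧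
    (∀ x y, X x b → X y b → x < y → x + d ≤ y) ∧
    ∃ s : Finset ℤ, (∀ x ∈ s, X x b) ∧ n < s.card) (N k : ℕ) :
    ∃ (bs : ℕ → Env) (c : ℕ → ℕ → ℤ) (M : ℕ),
      (∀ a < k, ∀ i < N, ∀ i' < N, c a i = c a i' → i = i') ∧
      ∀ η : ℕ → ℕ, (∀ j, η j < N) →
        (∀ a < k, Gr X (bs a) (c a (η a)) (∑ l ∈ Finset.Ico a k, c l (η l))) ∧
        0 ≤ ∑ l ∈ Finset.Ico 0 k, c l (η l) ∧ ∑ l ∈ Finset.Ico 0 k, c l (η l) ≤ M := by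
  induction k with
  | zero => exact ⟨fun _ _ => 0, fun _ _ => 0, 0, by simp, by simp⟩
  | succ k ih =>
    obtain ⟨bs, c, M, h1, h2⟩ := ih
    obtain ⟨b, hb0, hbg, s, hs, hcard⟩ := hbad N (M + 1) (by omega)
    let c0 : ℕ → ℤ := fun i => if h : i < s.card then (s.equivFin.symm ⟨i, h⟩ : ℤ) else 0
    have hc0 : ∀ i < N, c0 i ∈ s := by
      intro i hi
      simp only [c0, dif_pos (show i < s.card by omega)]
      exact (s.equivFin.symm _).2
    have hinj : ∀ i < N, ∀ i' < N, c0 i = c0 i' → i = i' := by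
      intro i hi i' hi' heq
      simp only [c0, dif_pos (show i < s.card by omega), dif_pos (show i' < s.card by omega)] at heq
      have := s.equivFin.symm.injective (Subtype.ext heq)
      simpa using this
    let bs' : ℕ → Env := fun j => if j = 0 then b else bs (j - 1)
    let c' : ℕ → ℕ → ℤ := fun j => if j = 0 then c0 else c (j - 1)
    refine ⟨bs', c', M + ∑ x ∈ s, x.toNat, ?_, ?_⟩
    · intro a ha
      rcases a with _ | a
      · simpa [c'] using hinj
      · simpa [c'] using h1 a (by omega)
    · intro η hη
      obtain ⟨g1, g2, g3⟩ := h2 (fun j => η (j + 1)) (fun j => hη _)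
      have hsum : ∀ a, ∑ l ∈ Finset.Ico (a + 1) (k + 1), c' l (η l) =
          ∑ l ∈ Finset.Ico a k, c l (η (l + 1)) := by
        intro a
        rw [← Finset.sum_Ico_add' (fun l => c' l (η l)) a k 1]
        simp [c']
      have hsum0 : ∑ l ∈ Finset.Ico 0 (k + 1), c' l (η l) =
          c0 (η 0) + ∑ l ∈ Finset.Ico 0 k, c l (η (l + 1)) := by
        rw [Finset.sum_eq_sum_Ico_succ_bot (by omega), hsum]
        simp [c']
      have hm := hc0 (η 0) (hη 0)
      have hnn := hb0 _ (hs _ hm)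
      have hle : (c0 (η 0)).toNat ≤ ∑ x ∈ s, x.toNat :=
        Finset.single_le_sum (f := fun x : ℤ => x.toNat) (fun _ _ => Nat.zero_le _) hm
      refine ⟨?_, ?_, ?_⟩
      · intro a ha
        rcases a with _ | a
        · rw [hsum0]
          simp only [bs', c', if_true]
          refine ⟨hs _ hm, by omega, ?_⟩
          intro y hy hyle
          by_contra hcon
          have := hbg _ y (hs _ hm) hy (by omega)
          push_cast at this
          omega
        · rw [hsum]
          simpa [bs', c'] using g1 a (by omega)
      · rw [hsum0]; omega
      · rw [hsum0]; push_cast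
        have : ((∑ x ∈ s, x.toNat : ℕ) : ℤ) ≥ c0 (η 0) := by omega
        push_cast at this
        omega

/-- finite patterns -/
theorem finpat (hbad : ∀ n d : ℕ, 0 < d → ∃ b, (∀ x, X x b → 0 ≤ x) ∧
    (∀ x y, X x b → X y b → x < y → x + d ≤ y) ∧
    ∃ s : Finset ℤ, (∀ x ∈ s, X x b) ∧ n < s.card) (N : ℕ) :
    ∃ (e : Env) (c : ℕ → ℕ → ℤ),
      (∀ a < N, ∀ i < N, ∀ i' < N, c a i = c a i' → i = i') ∧
      ∀ η : ℕ → ℕ, (∀ j, η j < N) → ∃ x, ∀ a < N, Psi X a x (c a (η a)) e := by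
  obtain ⟨bs, c, M, h1, h2⟩ := build hbad N N
  refine ⟨fun k => bs (Nat.unpair k).1 (Nat.unpair k).2, c, h1, fun η hη => ?_⟩
  obtain ⟨g, -, -⟩ := h2 η hη
  refine ⟨∑ l ∈ Finset.Ico 0 N, c l (η l), ?_⟩
  have key : ∀ a, a ≤ N → Tr X a (∑ l ∈ Finset.Ico 0 N, c l (η l))
      (fun k => bs (Nat.unpair k).1 (Nat.unpair k).2) (∑ l ∈ Finset.Ico a N, c l (η l)) := by
    intro a
    induction a with
    | zero => intro _; rfl
    | succ a ih =>
      intro ha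
      refine ⟨_, ih (by omega), c a (η a), ?_, ?_⟩
      · simpa using g a (by omega)
      · rw [Finset.sum_eq_sum_Ico_succ_bot (show a < N by omega)]
        ring
  intro a ha
  refine ⟨_, key a ha.le, ?_⟩
  simpa using g a ha

end pattern

section lang
variable (L : FirstOrder.Language.{0, 0}) [L.Structure ℤ]

def FD (p : Env → Prop) : Prop := ∃ φ : L.Formula ℕ, ∀ v : Env, φ.Realize v ↔ p v

variable {L}

theorem FD_DS (hadd : FD L (fun v => v 0 = v 1 + v 2)) (hlt : FD L (fun v => v 0 < v 1)) :
    DS (FD L) where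
  and := by
    rintro p q ⟨φ, hφ⟩ ⟨ψ, hψ⟩
    exact ⟨φ ⊓ ψ, fun v => by rw [Language.Formula.realize_inf, hφ, hψ]⟩
  not := by
    rintro p ⟨φ, hφ⟩
    exact ⟨φ.not, fun v => by rw [Language.Formula.realize_not, hφ]⟩
  ex := by
    rintro p ⟨φ, hφ⟩
    refine ⟨(φ.relabel (fun k => if k = 0 then Sum.inr (0 : Fin 1) else Sum.inl (k - 1))).iExs (Fin 1),
      fun v => ?_⟩
    rw [Language.Formula.realize_iExs]
    have : ∀ i : Fin 1 → ℤ, (φ.relabel (fun k => if k = 0 then Sum.inr (0 : Fin 1) else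
        Sum.inl (k - 1))).Realize (Sum.elim v i) ↔ p (i 0) v := by
      intro i
      rw [Language.Formula.realize_relabel, hφ]
      simp [Function.comp_def]
    simp only [this]
    exact ⟨fun ⟨i, hi⟩ => ⟨i 0, hi⟩, fun ⟨x, hx⟩ => ⟨fun _ => x, hx⟩⟩
  re := by
    rintro σ p ⟨φ, hφ⟩
    exact ⟨φ.relabel σ, fun v => by rw [Language.Formula.realize_relabel, hφ]; rfl⟩
  eq_add := hadd
  lt01 := hlt

theorem split_formula (χ : L.Formula ℕ) : ∃ (m : ℕ) (φ : L.Formula (Fin 1 ⊕ Fin m)),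
    ∀ (x : Fin 1 → ℤ) (E : Env), φ.Realize (Sum.elim x (fun k : Fin m => E k)) ↔
      χ.Realize (cons (x 0) E) := by
  classical
  have hb : ∀ a ∈ χ.freeVarFinset, a - 1 < χ.freeVarFinset.sup id + 1 := by
    intro a ha
    have := Finset.le_sup (f := id) ha
    simp only [id] at this
    omega
  refine ⟨χ.freeVarFinset.sup id + 1, χ.restrictFreeVar (fun a => if (a : ℕ) = 0 then Sum.inl 0 else
    Sum.inr ⟨(a : ℕ) - 1, hb a a.2⟩), fun x E => ?_⟩
  refine Language.BoundedFormula.realize_restrictFreeVar _ ?_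
  intro a
  unfold cons
  split_ifs <;> simp

theorem gap_of_strong (hDS : DS (FD L)) (hs : IsStrong L ℤ) : Gap (FD L) := by
  intro X hX
  by_contra hcon
  push Not at hcon
  choose e c hinj hpath using finpat (X := X) (fun n d hd => by
    obtain ⟨b, h1, h2, s, h3, h4⟩ := hcon n d hd
    exact ⟨b, h1, h2, s, h3, h4⟩)
  choose χ hχ using fun a => Psi_def hDS hX a
  choose m φ hφ using fun a => split_formula (χ a)
  have hreal : ∀ a (x : Fin 1 → ℤ) (cc : ℤ) (ee : Env),
      (φ a).Realize (Sum.elim x (fun k : Fin (m a) => cons cc ee k)) ↔ Psi X a (x 0) cc ee := by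
    intro a x cc ee
    rw [hφ, hχ]
    rfl
  let u : Ultrafilter ℕ := Filter.hyperfilter ℕ
  let N := (u : Filter ℕ).Product (fun _ : ℕ => ℤ)
  have hlarge : ∀ n : ℕ, ∀ᶠ k in (u : Filter ℕ), n < k := by
    intro n
    have h1 : ∀ᶠ k in Filter.atTop, n < k := Filter.eventually_gt_atTop n
    rw [← Nat.cofinite_eq_atTop] at h1
    exact Filter.hyperfilter_le_cofinite h1
  have hmodel : (L.completeTheory ℤ).Model N := by
    refine ⟨fun ψ hψ => ?_⟩
    rw [Language.Ultraproduct.sentence_realize]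
    exact Filter.Eventually.of_forall (fun _ => hψ)
  have hlos : ∀ a i (xs : Fin 1 → ℕ → ℤ),
      (φ a).Realize (Sum.elim (fun j => (Quotient.mk _ (xs j) : N))
        (fun k : Fin (m a) => (Quotient.mk _ (fun n => cons (c n a i) (e n) k) : N))) ↔
      ∀ᶠ n in (u : Filter ℕ), Psi X a (xs 0 n) (c n a i) (e n) := by
    intro a i xs
    have := Language.Ultraproduct.realize_formula_cast (u := u) (M := fun _ : ℕ => ℤ) (φ a)
      (Sum.elim xs (fun (k : Fin (m a)) n => cons (c n a i) (e n) k))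
    have e1 : (Sum.elim (fun j => (Quotient.mk _ (xs j) : N))
        (fun k : Fin (m a) => (Quotient.mk _ (fun n => cons (c n a i) (e n) k) : N))) =
        fun z => (Quotient.mk _ (Sum.elim xs (fun (k : Fin (m a)) n => cons (c n a i) (e n) k) z) : N) := by
      funext z
      rcases z with z | z <;> rfl
    rw [e1]
    refine this.trans ?_
    refine Filter.eventually_congr (Filter.Eventually.of_forall fun n => ?_)
    rw [← hreal a (fun j => xs j n)]
    apply iff_of_eq
    congr 1
    funext z
    rcases z with z | z <;> rfl
  refine hs ⟨N⟩ 1 ⟨m, φ, fun _ => 2, fun a i k => Quotient.mk _ (fun n => cons (c n a i) (e n) k),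
    fun _ => by norm_num, ?_, ?_⟩
  · rintro a ⟨x, s, hcard, hall⟩
    obtain ⟨i, hi, i', hi', hne⟩ := Finset.one_lt_card.1 (show 1 < s.card from hcard)
    choose xs hxs using fun j => Quotient.exists_rep (x j)
    have hx : x = fun j => (Quotient.mk _ (xs j) : N) := funext fun j => (hxs j).symm
    have r1 := hall i hi
    have r2 := hall i' hi'
    rw [hx] at r1 r2
    have r1 := (hlos a i xs).1 r1
    have r2 := (hlos a i' xs).1 r2
    obtain ⟨n, h1, h2, h3, h4, h5⟩ := (r1.and (r2.and ((hlarge i).and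
      ((hlarge i').and (hlarge a))))).exists
    exact hne (hinj n a h5 i h3 i' h4 (h1.unique X h2))
  · intro η S
    have hx : ∀ n, ∃ x, ∀ a < n, η a < n → Psi X a x (c n a (η a)) (e n) := by
      intro n
      rcases Nat.eq_zero_or_pos n with h0 | h0
      · exact ⟨0, fun a ha => by omega⟩
      · obtain ⟨x, hx⟩ := hpath n (fun j => if η j < n then η j else 0) (by
          intro j
          split_ifs <;> omega)
        refine ⟨x, fun a ha h1 => ?_⟩
        have := hx a ha
        simpa only [if_pos h1] using this
    choose x hx using hx
    refine ⟨fun _ => Quotient.mk _ x, fun a _ => ?_⟩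
    refine (hlos a (η a) (fun _ => x)).2 ?_
    filter_upwards [hlarge a, hlarge (η a)] with n h1 h2
    exact hx n a h1 h2

end lang

end StrongZ

theorem FD_loag_DS : StrongZ.DS (StrongZ.FD Loag) := by
  apply StrongZ.FD_DS
  · refine ⟨(Language.Term.var 0).equal (Language.Term.func (OagFunc.add : Loag.Functions 2)
      ![Language.Term.var 1, Language.Term.var 2]), fun v => ?_⟩
    rw [Language.Formula.realize_equal]
    rfl
  · refine ⟨Language.Relations.formula (OagRel.lt : Loag.Relations 2)
      ![Language.Term.var 0, Language.Term.var 1], fun v => ?_⟩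
    exact Language.Formula.realize_rel.trans Iff.rfl

theorem FD_loagR_DS (m : ℕ) (R : Set (Fin m → ℤ)) :
    StrongZ.DS (@StrongZ.FD (LoagR m) (structR m R)) := by
  letI := structR m R
  apply StrongZ.FD_DS
  · refine ⟨(Language.Term.var 0).equal (Language.Term.func (OagFunc.add : (LoagR m).Functions 2)
      ![Language.Term.var 1, Language.Term.var 2]), fun v => ?_⟩
    rw [Language.Formula.realize_equal]
    rfl
  · refine ⟨Language.Relations.formula (OagRRel.lt : (LoagR m).Relations 2)
      ![Language.Term.var 0, Language.Term.var 1], fun v => ?_⟩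
    exact Language.Formula.realize_rel.trans Iff.rfl

theorem FD_R (m : ℕ) (R : Set (Fin m → ℤ)) :
    @StrongZ.FD (LoagR m) (structR m R) (fun v => (fun i : Fin m => v i) ∈ R) := by
  letI := structR m R
  refine ⟨Language.Relations.formula (OagRRel.r : (LoagR m).Relations m)
      (fun i => Language.Term.var (i : ℕ)), fun v => ?_⟩
  exact Language.Formula.realize_rel.trans Iff.rfl

/-- If `m ≥ 1`, `R ⊆ ℤ^m`, and the theory of `⟨ℤ; 0, +, −, <, R⟩` is strong,
then `R` is definable with parameters in Presburger arithmetic `⟨ℤ; 0, +, −, <⟩`. -/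
theorem statement_18 (m : ℕ) (hm : 1 ≤ m) (R : Set (Fin m → ℤ))
    (hstrong : @IsStrong (LoagR m) ℤ (structR m R)) :
    (Set.univ : Set ℤ).Definable Loag R := by
  classical
  have hD := FD_loagR_DS m R
  have hG := @StrongZ.gap_of_strong (LoagR m) (structR m R) hD hstrong
  let F : StrongZ.Env → ℤ := fun v => if (fun i : Fin m => v i) ∈ R then 1 else 0
  have hF : StrongZ.DF (@StrongZ.FD (LoagR m) (structR m R)) F := by
    have hR : @StrongZ.FD (LoagR m) (structR m R) (fun v => (fun i : Fin m => v (i + 1)) ∈ R) :=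
      hD.re (fun k => k + 1) (FD_R m R)
    refine StrongZ.DS.congr' (hD.or (hD.and hR (hD.eq (hD.var 0) (hD.const 1)))
      (hD.and (hD.not hR) (hD.eq (hD.var 0) (hD.const 0)))) (fun v => ?_)
    simp only [F]
    by_cases h : (fun i : Fin m => v (i + 1)) ∈ R <;> simp [h]
  have hP := StrongZ.main hD hG FD_loag_DS m F hF (by
    intro v w hvw
    have : (fun i : Fin m => v i) = fun i : Fin m => w i := funext fun i => hvw i i.2
    simp only [F, this])
  obtain ⟨φ, hφ⟩ := FD_loag_DS.eq hP (FD_loag_DS.const 1)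
  refine Set.Definable.mono (A := ∅) ?_ (Set.empty_subset _)
  rw [Set.empty_definable_iff]
  refine ⟨φ.relabel (fun k => if h : k < m then ⟨k, h⟩ else ⟨0, hm⟩), ?_⟩
  ext w
  show w ∈ R ↔ (φ.relabel _).Realize w
  rw [Language.Formula.realize_relabel, hφ]
  simp only [F, Function.comp_def]
  have : (fun i : Fin m => w (if h : (i : ℕ) < m then ⟨i, h⟩ else ⟨0, hm⟩)) = w := by
    funext i
    simp
  rw [this]
  by_cases h : w ∈ R <;> simp [h]
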